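/- Let V be a set and ℌ a halfspace system on V. Let (a_n)_{n∈ℕ} and (b_n)_{n∈ℕ} be strictly descending chains in ℌ, each pairwise strongly separated, and suppose there exists h ∈ ℌ such that a_n ∩ h ≠ ∅ and b_n ∩ (V \ h) ≠ ∅ for all n. Then there exists a bi-infinite sequence (s_n)_{n∈ℤ} in ℌ with s_{n+1} ⊊ s_n for all n ∈ ℤ, pairwise strongly separated, such that for n ≥ 0 the set s_n is a term of the chain (a_m) and satisfies s_n ⊆ h, and for n < 0 the set s_n is the complement of a term of the chain (b_m) and satisfies h ⊆ s_n. -/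

import Mathlib

/-!
The halfspace `h` is transverse to at most one `a n`. If `a n` is not transverse to `h`, then
(as `a n` meets `h`) `a n ⊆ h`, `h ⊆ a n` or `hᶜ ⊆ a n`; interval-finiteness excludes the last two
for large `n`, since an infinite strictly descending chain has no lower bound in the system. Hence
`a N ⊆ h` for some `N` (`exists_subset`), and likewise `b M ⊆ hᶜ` for some `M`.

The chain is `… ⊃ (b (M+1))ᶜ ⊃ (b M)ᶜ ⊃ a (N+1) ⊃ a (N+2) ⊃ …`, that is
`s n = a (N+1+n)` for `n ≥ 0` and `s (-1-n) = (b (M+n))ᶜ`. The shift by one on the `a` side gives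
strictness in the middle and strong separation across it: a halfspace transverse to `a (i+1)` and to
a set disjoint from `a i` is transverse to `a i` as well (`Transverse.of_between`), contradicting
strong separation of `a i` and `a (i+1)`.
-/

/-- Two subsets `h, k` of `V` are transverse if the four "corners" are all nonempty. -/
def Transverse {V : Type*} (h k : Set V) : Prop :=
  (h ∩ k).Nonempty ∧ (h ∩ kᶜ).Nonempty ∧ (hᶜ ∩ k).Nonempty ∧ (hᶜ ∩ kᶜ).Nonempty

/-- A halfspace system on `V`: a family of subsets closed under complementation and
interval-finite. -/
structure HalfspaceSystem (V : Type*) where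
  carrier : Set (Set V)
  compl_mem : ∀ h ∈ carrier, hᶜ ∈ carrier
  intervalFinite : ∀ h ∈ carrier, ∀ k ∈ carrier, h ⊆ k →
    {m ∈ carrier | h ⊆ m ∧ m ⊆ k}.Finite

/-- Two halfspaces are strongly separated if no member of the system is transverse to both. -/
def StronglySeparated {V : Type*} (ℌ : HalfspaceSystem V) (h k : Set V) : Prop :=
  ∀ m ∈ ℌ.carrier, ¬(Transverse m h ∧ Transverse m k)

theorem Transverse.compl_right {V : Type*} {m k : Set V} (H : Transverse m k) :
    Transverse m kᶜ := by
  obtain ⟨h1, h2, h3, h4⟩ := H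
  exact ⟨h2, by rwa [compl_compl], h4, by rwa [compl_compl]⟩

theorem Transverse.of_compl_right {V : Type*} {m k : Set V} (H : Transverse m kᶜ) :
    Transverse m k := by
  simpa using H.compl_right

/-- Transversality to two nested sets passes to every set in between. -/
theorem Transverse.of_between {V : Type*} {m x y z : Set V} (hx : Transverse m x)
    (hz : Transverse m z) (hxy : x ⊆ y) (hyz : y ⊆ z) : Transverse m y :=
  ⟨hx.1.mono (Set.inter_subset_inter_right _ hxy),
    hz.2.1.mono (Set.inter_subset_inter_right _ (Set.compl_subset_compl.2 hyz)),
    hx.2.2.1.mono (Set.inter_subset_inter_right _ hxy),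
    hz.2.2.2.mono (Set.inter_subset_inter_right _ (Set.compl_subset_compl.2 hyz))⟩

/-- By interval-finiteness, a strictly descending chain has no lower bound in the system. -/
theorem exists_not_subset {V : Type*} (ℌ : HalfspaceSystem V)
    (a : ℕ → Set V) (hamem : ∀ n, a n ∈ ℌ.carrier) (ha : StrictAnti a)
    (k : Set V) (hk : k ∈ ℌ.carrier) : ∃ n, ¬ k ⊆ a n := by
  by_contra! H
  refine absurd (ℌ.intervalFinite k hk (a 0) (hamem 0) (H 0)) ?_
  exact Set.infinite_of_injective_forall_mem ha.injective
    (fun n => ⟨hamem n, H n, ha.antitone (Nat.zero_le n)⟩)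

/-- A pairwise strongly separated descending chain all of whose terms meet `h` eventually lies
inside `h`. -/
theorem exists_subset {V : Type*} (ℌ : HalfspaceSystem V)
    (a : ℕ → Set V) (hamem : ∀ n, a n ∈ ℌ.carrier) (ha : StrictAnti a)
    (hass : ∀ i j, i ≠ j → StronglySeparated ℌ (a i) (a j))
    (h : Set V) (hh : h ∈ ℌ.carrier) (hha : ∀ n, (a n ∩ h).Nonempty) : ∃ n, a n ⊆ h := by
  obtain ⟨p, hp⟩ := exists_not_subset ℌ a hamem ha h hh
  obtain ⟨q, hq⟩ := exists_not_subset ℌ a hamem ha hᶜ (ℌ.compl_mem h hh)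
  by_contra! H
  have key : ∀ n, max p q ≤ n → Transverse h (a n) := by
    intro n hn
    have h1 : ¬ h ⊆ a n := fun hs =>
      hp (hs.trans (ha.antitone ((le_max_left p q).trans hn)))
    have h2 : ¬ hᶜ ⊆ a n := fun hs =>
      hq (hs.trans (ha.antitone ((le_max_right p q).trans hn)))
    refine ⟨by simpa [Set.inter_comm] using hha n, ?_, ?_, ?_⟩
    · obtain ⟨x, hx, hx'⟩ := Set.not_subset.1 h1
      exact ⟨x, hx, hx'⟩
    · obtain ⟨x, hx, hx'⟩ := Set.not_subset.1 (H n)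
      exact ⟨x, hx', hx⟩
    · obtain ⟨x, hx, hx'⟩ := Set.not_subset.1 h2
      exact ⟨x, hx, hx'⟩
  exact hass (max p q) (max p q + 1) (by omega) h hh ⟨key _ le_rfl, key _ (Nat.le_succ _)⟩

/-- from two pairwise strongly separated descending chains `(aₙ)` and `(bₙ)`,
separated by a halfspace `h` (with `aₙ ∩ h ≠ ∅` and `bₙ ∩ hᶜ ≠ ∅`), one can build a
bi-infinite strictly descending pairwise strongly separated chain `(sₙ)_{n ∈ ℤ}` with
`sₙ` a term of `(aₘ)` contained in `h` for `n ≥ 0`, and `sₙ` the complement of a term of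
`(bₘ)` containing `h` for `n < 0`. -/
theorem biinfinite_chain_exists
    {V : Type*} (ℌ : HalfspaceSystem V)
    (a : ℕ → Set V) (hamem : ∀ n, a n ∈ ℌ.carrier) (hadesc : ∀ n, a (n + 1) ⊂ a n)
    (hass : ∀ i j, i ≠ j → StronglySeparated ℌ (a i) (a j))
    (b : ℕ → Set V) (hbmem : ∀ n, b n ∈ ℌ.carrier) (hbdesc : ∀ n, b (n + 1) ⊂ b n)
    (hbss : ∀ i j, i ≠ j → StronglySeparated ℌ (b i) (b j))
    (h : Set V) (hh : h ∈ ℌ.carrier)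
    (hha : ∀ n, (a n ∩ h).Nonempty) (hhb : ∀ n, (b n ∩ hᶜ).Nonempty) :
    ∃ s : ℤ → Set V,
      (∀ n, s n ∈ ℌ.carrier) ∧
      (∀ n : ℤ, s (n + 1) ⊂ s n) ∧
      (∀ i j : ℤ, i ≠ j → StronglySeparated ℌ (s i) (s j)) ∧
      (∀ n : ℤ, 0 ≤ n → (∃ m : ℕ, s n = a m) ∧ s n ⊆ h) ∧
      (∀ n : ℤ, n < 0 → (∃ m : ℕ, s n = (b m)ᶜ) ∧ h ⊆ s n) := by
  have ha : StrictAnti a := strictAnti_nat_of_succ_lt hadesc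
  have hb : StrictAnti b := strictAnti_nat_of_succ_lt hbdesc
  obtain ⟨N, hN⟩ := exists_subset ℌ a hamem ha hass h hh hha
  obtain ⟨M, hM⟩ := exists_subset ℌ b hbmem hb hbss hᶜ (ℌ.compl_mem h hh) hhb
  have haN : ∀ n, a (N + n) ⊆ h := fun n => (ha.antitone (Nat.le_add_right N n)).trans hN
  have hbM : ∀ n, h ⊆ (b (M + n))ᶜ := fun n =>
    Set.subset_compl_comm.1 ((hb.antitone (Nat.le_add_right M n)).trans hM)
  -- `a (N + i)` lies between `a (N + 1 + i)` and `(b (M + j))ᶜ`.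
  have cross : ∀ i j, ∀ m ∈ ℌ.carrier, Transverse m (a (N + 1 + i)) →
      Transverse m (b (M + j))ᶜ → False := fun i j m hm h1 h2 =>
    hass (N + 1 + i) (N + i) (by omega) m hm
      ⟨h1, h1.of_between h2 (ha.antitone (by omega)) ((haN i).trans (hbM j))⟩
  refine ⟨fun n => match n with
    | Int.ofNat n => a (N + 1 + n)
    | Int.negSucc n => (b (M + n))ᶜ, ?_, ?_, ?_, ?_, ?_⟩
  · rintro (n | n)
    · exact hamem _
    · exact ℌ.compl_mem _ (hbmem _)
  · rintro (n | _ | n)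
    · exact hadesc _
    · exact (hadesc N).trans_subset (hN.trans (hbM 0))
    · exact compl_lt_compl_iff_lt.2 (hbdesc (M + n))
  · rintro (i | i) (j | j) hij m hm ⟨h1, h2⟩
    · exact hass _ _ (fun e => hij (by congr 1; omega)) m hm ⟨h1, h2⟩
    · exact cross i j m hm h1 h2
    · exact cross j i m hm h2 h1
    · exact hbss _ _ (fun e => hij (by congr 1; omega)) m hm
        ⟨h1.of_compl_right, h2.of_compl_right⟩
  · rintro (n | n) hn
    · exact ⟨⟨_, rfl⟩, by simpa [Nat.add_assoc] using haN (1 + n)⟩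
    · exact absurd hn (by simp)
  · rintro (n | n) hn
    · exact absurd hn (by simp)
    · exact ⟨⟨_, rfl⟩, hbM n⟩
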